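/- (Integrability of Darboux's linear system with holomorphic data — Weierstrass-type representation for cmc-1 surfaces.) Let U ⊆ ℂ be open, g, ω : U → ℂ holomorphic with complex derivative g′ of g, λ ∈ ℝ, p₀ ∈ U, and (a, b) ∈ ℍ². Then there exist an open neighbourhood V ⊆ U of p₀ and smooth maps v₁, v₂ : V → ℍ with v₁(p₀) = a, v₂(p₀) = b, satisfying the system ∂_x v₁ = −λ·ω·j·v₂, ∂_y v₁ = −λ·ω·i·j·v₂, ∂_x v₂ = j·g′·v₁, ∂_y v₂ = j·g′·i·v₁ on V. (For a solution with v₂·v₁⁻¹ avoiding ℂ·j, the map f^# := −j·g + v₂·v₁⁻¹ is a λ-Darboux transform of −j·g, giving a surface of constant mean curvature 2λ in hyperbolic space with hyperbolic Gauss map −j·g.) -/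

import Mathlib

/-!
The system is a holomorphic linear ODE in disguise. With `u = j * v₂` and `dz = dx + i dy` it reads
`dv₁ = -λ ω dz u`, `du = -g' dz v₁`, where the coefficients now act by left multiplication by
complex numbers. Splitting `ℍ = ℂ ⊕ ℂ j`, so that `v₁ = α + β j` and `u = γ + δ j`, decouples it into
the two complex systems `α' = -λ ω γ, γ' = -g' α` and `β' = -λ ω δ, δ' = -g' β`. Each has a local
holomorphic solution (`exists_holomorphic_linear_ode`): the Picard iteration is run with holomorphic
primitives on a small disc and converges geometrically, uniformly with its derivatives. Reassembling
the components gives real-smooth maps whose Fréchet derivative in direction `h` is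
`dv₁ h = -λ ω h u` and `dv₂ h = j g' h v₁`; the system is the cases `h = 1` and `h = i`.
-/

/- STATEMENT 18 (Integrability of Darboux's linear system with holomorphic data —
Weierstrass-type representation for cmc-1 surfaces): For holomorphic g, ω : U → ℂ,
λ ∈ ℝ, p₀ ∈ U and (a,b) ∈ ℍ², there is a local smooth solution (v₁, v₂) near p₀ of
∂_x v₁ = −λ·ω·j·v₂, ∂_y v₁ = −λ·ω·i·j·v₂, ∂_x v₂ = j·g′·v₁, ∂_y v₂ = j·g′·i·v₁
with v₁(p₀) = a, v₂(p₀) = b. -/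

noncomputable section
open scoped ContDiff Quaternion

abbrev HQ : Type := Quaternion ℝ

def qi : HQ := ⟨0, 1, 0, 0⟩
def qj : HQ := ⟨0, 0, 1, 0⟩

/-- The embedding ℂ ⊂ ℍ as the real span of 1 and i. -/
def cq (z : ℂ) : HQ := ⟨z.re, z.im, 0, 0⟩

/-- Partial derivative in the x-direction of a map on ℂ ≅ ℝ². -/
noncomputable def pdzx {E : Type} [NormedAddCommGroup E] [NormedSpace ℝ E]
    (f : ℂ → E) (z : ℂ) : E := fderiv ℝ f z 1

/-- Partial derivative in the y-direction of a map on ℂ ≅ ℝ². -/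
noncomputable def pdzy {E : Type} [NormedAddCommGroup E] [NormedSpace ℝ E]
    (f : ℂ → E) (z : ℂ) : E := fderiv ℝ f z Complex.I

open Metric in
/-- Local existence for the holomorphic linear initial value problem `y' = A y`, `y p = y₀`. -/
lemma exists_holomorphic_linear_ode {E : Type*} [NormedAddCommGroup E] [NormedSpace ℂ E]
    [CompleteSpace E] {U : Set ℂ} (hU : IsOpen U) {A : ℂ → E →L[ℂ] E}
    (hA : DifferentiableOn ℂ A U) {p : ℂ} (hp : p ∈ U) (y₀ : E) :
    ∃ r > 0, ball p r ⊆ U ∧ ∃ y : ℂ → E, y p = y₀ ∧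
      ∀ z ∈ ball p r, HasDerivAt y (A z (y z)) z := by
  set K : ℝ := ‖A p‖ + 1 with hK
  have hKpos : 0 < K := by positivity
  have hcont : ContinuousAt A p := (hA.differentiableAt (hU.mem_nhds hp)).continuousAt
  have hev : ∀ᶠ z in nhds p, z ∈ U ∧ ‖A z‖ < K :=
    (hU.eventually_mem hp).and (hcont.norm.eventually_lt_const (by simp [hK]))
  obtain ⟨r₀, hr₀, hball⟩ := eventually_nhds_iff_ball.1 hev
  -- On a disc of radius at most `1 / (2 K)` each Picard step halves the sup norm.
  set r : ℝ := min r₀ (1 / (2 * K)) with hr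
  have hrpos : 0 < r := by positivity
  have hpr : p ∈ ball p r := mem_ball_self hrpos
  have hrU : ∀ z ∈ ball p r, z ∈ U ∧ ‖A z‖ < K := fun z hz =>
    hball z (ball_subset_ball (min_le_left _ _) hz)
  have hKr : K * r ≤ 1 / 2 := by
    calc K * r ≤ K * (1 / (2 * K)) := by gcongr; exact min_le_right _ _
      _ = 1 / 2 := by field_simp
  have hstep : ∀ f : ℂ → E, ∃ F : ℂ → E, DifferentiableOn ℂ f (ball p r) →
      F p = 0 ∧ ∀ z ∈ ball p r, HasDerivAt F (A z (f z)) z := by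
    intro f
    by_cases hf : DifferentiableOn ℂ f (ball p r)
    · have h : DifferentiableOn ℂ (fun z => A z (f z)) (ball p r) :=
        (hA.mono fun z hz => (hrU z hz).1).clm_apply hf
      obtain ⟨F, hF⟩ := h.isExactOn_ball.with_val_at p 0
      exact ⟨F, fun _ => hF⟩
    · exact ⟨0, fun h => absurd h hf⟩
  choose P hP using hstep
  -- `D n` is the difference of consecutive Picard iterates.
  let D : ℕ → ℂ → E := fun n => P^[n] fun _ => y₀
  have hDs : ∀ n, D (n + 1) = P (D n) := fun n => Function.iterate_succ_apply' P n _
  have hDd : ∀ n, DifferentiableOn ℂ (D n) (ball p r) := by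
    intro n
    induction n with
    | zero => exact differentiableOn_const _
    | succ n ih =>
      rw [hDs]
      exact fun z hz => ((hP _ ih).2 z hz).differentiableAt.differentiableWithinAt
  have hD0 : ∀ n, D (n + 1) p = 0 := fun n => by rw [hDs]; exact (hP _ (hDd n)).1
  have hDder : ∀ n, ∀ z ∈ ball p r, HasDerivAt (D (n + 1)) (A z (D n z)) z := fun n => by
    rw [hDs]; exact (hP _ (hDd n)).2
  have hAbound : ∀ (n : ℕ) (C : ℝ), (∀ z ∈ ball p r, ‖D n z‖ ≤ C) →
      ∀ z ∈ ball p r, ‖A z (D n z)‖ ≤ K * C := fun n C h z hz =>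
    (A z).le_of_opNorm_le_of_le (hrU z hz).2.le (h z hz)
  have hDb : ∀ n, ∀ z ∈ ball p r, ‖D n z‖ ≤ ‖y₀‖ * (1 / 2) ^ n := by
    intro n
    induction n with
    | zero => intro z _; simp [D]
    | succ n ih =>
      intro z hz
      have h := (convex_ball p r).norm_image_sub_le_of_norm_hasDerivWithin_le
        (fun x hx => (hDder n x hx).hasDerivWithinAt) (hAbound n _ ih) hpr hz
      rw [hD0, sub_zero] at h
      have hzr : ‖z - p‖ ≤ r := (mem_ball_iff_norm.1 hz).le
      calc ‖D (n + 1) z‖ ≤ K * (‖y₀‖ * (1 / 2) ^ n) * ‖z - p‖ := h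
        _ ≤ K * (‖y₀‖ * (1 / 2) ^ n) * r := by gcongr
        _ = (K * r) * (‖y₀‖ * (1 / 2) ^ n) := by ring
        _ ≤ (1 / 2) * (‖y₀‖ * (1 / 2) ^ n) := by gcongr
        _ = ‖y₀‖ * (1 / 2) ^ (n + 1) := by ring
  have hgeom : Summable fun n : ℕ => ‖y₀‖ * (1 / 2 : ℝ) ^ n :=
    summable_geometric_two.mul_left _
  have hDsum : ∀ z ∈ ball p r, Summable fun n => D n z := fun z hz =>
    .of_norm_bounded hgeom fun n => hDb n z hz
  refine ⟨r, hrpos, fun z hz => (hrU z hz).1, fun z => y₀ + ∑' n, D (n + 1) z, ?_, ?_⟩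
  · simp [hD0]
  · intro z hz
    have h := hasDerivAt_tsum_of_isPreconnected (hgeom.mul_left K) isOpen_ball
      (convex_ball p r).isPreconnected hDder (fun n => hAbound n _ (hDb n)) hpr
      ((summable_nat_add_iff 1).2 (hDsum p hpr)) hz
    convert h.const_add y₀ using 1
    have hsplit : y₀ + ∑' n, D (n + 1) z = ∑' n, D n z := (hDsum z hz).tsum_eq_zero_add.symm
    beta_reduce
    rw [hsplit]
    exact (A z).map_tsum (hDsum z hz)

/-- The case of an off-diagonal `2 × 2` system. -/
lemma exists_holomorphic_pair {U : Set ℂ} (hU : IsOpen U) {s t : ℂ → ℂ}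
    (hs : DifferentiableOn ℂ s U) (ht : DifferentiableOn ℂ t U) {p : ℂ} (hp : p ∈ U) (c d : ℂ) :
    ∃ r > 0, Metric.ball p r ⊆ U ∧ ∃ α γ : ℂ → ℂ, α p = c ∧ γ p = d ∧
      ∀ z ∈ Metric.ball p r,
        HasDerivAt α (s z * γ z) z ∧ HasDerivAt γ (t z * α z) z := by
  let S : ℂ × ℂ →L[ℂ] ℂ × ℂ :=
    (ContinuousLinearMap.inl ℂ ℂ ℂ).comp (ContinuousLinearMap.snd ℂ ℂ ℂ)
  let T : ℂ × ℂ →L[ℂ] ℂ × ℂ :=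
    (ContinuousLinearMap.inr ℂ ℂ ℂ).comp (ContinuousLinearMap.fst ℂ ℂ ℂ)
  have hA : DifferentiableOn ℂ (fun z => s z • S + t z • T) U :=
    (hs.smul_const S).add (ht.smul_const T)
  obtain ⟨r, hr, hrU, y, hy0, hy⟩ := exists_holomorphic_linear_ode hU hA hp (c, d)
  refine ⟨r, hr, hrU, fun z => (y z).1, fun z => (y z).2, by simp [hy0], by simp [hy0],
    fun z hz => ⟨?_, ?_⟩⟩
  · simpa [S, T] using (hy z hz).hasFDerivAt.fst.hasDerivAt
  · simpa [S, T] using (hy z hz).hasFDerivAt.snd.hasDerivAt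

@[simp] lemma cq_re (z : ℂ) : (cq z).re = z.re := rfl
@[simp] lemma cq_imI (z : ℂ) : (cq z).imI = z.im := rfl
@[simp] lemma cq_imJ (z : ℂ) : (cq z).imJ = 0 := rfl
@[simp] lemma cq_imK (z : ℂ) : (cq z).imK = 0 := rfl
@[simp] lemma qi_re : qi.re = 0 := rfl
@[simp] lemma qi_imI : qi.imI = 1 := rfl
@[simp] lemma qi_imJ : qi.imJ = 0 := rfl
@[simp] lemma qi_imK : qi.imK = 0 := rfl
@[simp] lemma qj_re : qj.re = 0 := rfl
@[simp] lemma qj_imI : qj.imI = 0 := rfl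
@[simp] lemma qj_imJ : qj.imJ = 1 := rfl
@[simp] lemma qj_imK : qj.imK = 0 := rfl

/-- The embedding `cq` as a continuous real-linear map. -/
def cqL : ℂ →L[ℝ] HQ :=
  LinearMap.toContinuousLinearMap
    { toFun := cq
      map_add' := fun x y => by ext <;> simp
      map_smul' := fun x y => by ext <;> simp }

lemma cqL_apply (z : ℂ) : cqL z = cq z := rfl

/-- The real derivative of `q * (α + β j)` for holomorphic `α`, `β` and constant `q`. -/
lemma hasFDerivAt_assemble (q : HQ) {α β : ℂ → ℂ} {α' β' z : ℂ}
    (hα : HasDerivAt α α' z) (hβ : HasDerivAt β β' z) :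
    ∃ L : ℂ →L[ℝ] HQ, HasFDerivAt (fun z => q * (cq (α z) + cq (β z) * qj)) L z ∧
      ∀ h, L h = q * (cq (h * α') + cq (h * β') * qj) := by
  have h1 := cqL.hasFDerivAt.comp z (hα.hasFDerivAt.restrictScalars ℝ)
  have h2 := (cqL.hasFDerivAt.comp z (hβ.hasFDerivAt.restrictScalars ℝ)).mul_const' qj
  exact ⟨_, (h1.add h2).const_mul q, fun h => by simp [cqL_apply, mul_add]⟩

lemma contDiffOn_assemble (q : HQ) {α β : ℂ → ℂ} {V : Set ℂ} (hV : IsOpen V)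
    (hα : DifferentiableOn ℂ α V) (hβ : DifferentiableOn ℂ β V) :
    ContDiffOn ℝ ∞ (fun z => q * (cq (α z) + cq (β z) * qj)) V := by
  have h1 := cqL.contDiff.comp_contDiffOn ((hα.contDiffOn (n := ∞) hV).restrict_scalars ℝ)
  have h2 := cqL.contDiff.comp_contDiffOn ((hβ.contDiffOn (n := ∞) hV).restrict_scalars ℝ)
  exact contDiffOn_const.mul (h1.add (h2.mul contDiffOn_const))

theorem darboux_linear_system_integrable
    (U : Set ℂ) (hU : IsOpen U) (g g' w : ℂ → ℂ)
    (hg : ∀ z ∈ U, HasDerivAt g (g' z) z) (hw : DifferentiableOn ℂ w U)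
    (lam : ℝ) (p₀ : ℂ) (hp₀ : p₀ ∈ U) (a b : HQ) :
    ∃ V : Set ℂ, IsOpen V ∧ p₀ ∈ V ∧ V ⊆ U ∧
      ∃ v₁ v₂ : ℂ → HQ,
        v₁ p₀ = a ∧ v₂ p₀ = b ∧
        ContDiffOn ℝ ∞ v₁ V ∧ ContDiffOn ℝ ∞ v₂ V ∧
        ∀ z ∈ V,
          pdzx v₁ z = -((lam : HQ) * cq (w z) * qj * v₂ z) ∧
          pdzy v₁ z = -((lam : HQ) * cq (w z) * qi * qj * v₂ z) ∧
          pdzx v₂ z = qj * cq (g' z) * v₁ z ∧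
          pdzy v₂ z = qj * cq (g' z) * qi * v₁ z := by
  have hg' : DifferentiableOn ℂ g' U := by
    have hd : DifferentiableOn ℂ g U := fun z hz =>
      (hg z hz).differentiableAt.differentiableWithinAt
    exact (hd.deriv hU).congr fun z hz => (hg z hz).deriv.symm
  have hs : DifferentiableOn ℂ (fun z => -(lam : ℂ) * w z) U := hw.const_mul _
  have ht : DifferentiableOn ℂ (fun z => -g' z) U := hg'.neg
  -- The initial values are the components of `a = α + β j` and `j * b = γ + δ j`.
  obtain ⟨r, hr, hrU, α, γ, hα0, hγ0, hαγ⟩ := exists_holomorphic_pair hU hs ht hp₀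
    ⟨a.re, a.imI⟩ ⟨-b.imJ, b.imK⟩
  obtain ⟨r', hr', -, β, δ, hβ0, hδ0, hβδ⟩ := exists_holomorphic_pair hU hs ht hp₀
    ⟨a.imJ, a.imK⟩ ⟨b.re, -b.imI⟩
  have hV : IsOpen (Metric.ball p₀ r ∩ Metric.ball p₀ r') :=
    Metric.isOpen_ball.inter Metric.isOpen_ball
  refine ⟨Metric.ball p₀ r ∩ Metric.ball p₀ r', hV,
    ⟨Metric.mem_ball_self hr, Metric.mem_ball_self hr'⟩, fun z hz => hrU hz.1,
    fun z => 1 * (cq (α z) + cq (β z) * qj), fun z => -qj * (cq (γ z) + cq (δ z) * qj),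
    ?_, ?_, ?_, ?_, ?_⟩
  · ext <;> simp [hα0, hβ0]
  · ext <;> simp [hγ0, hδ0]
  · exact contDiffOn_assemble _ hV
      (fun z hz => (hαγ z hz.1).1.differentiableAt.differentiableWithinAt)
      (fun z hz => (hβδ z hz.2).1.differentiableAt.differentiableWithinAt)
  · exact contDiffOn_assemble _ hV
      (fun z hz => (hαγ z hz.1).2.differentiableAt.differentiableWithinAt)
      (fun z hz => (hβδ z hz.2).2.differentiableAt.differentiableWithinAt)
  · intro z hz
    obtain ⟨L₁, hL₁, hL₁'⟩ := hasFDerivAt_assemble 1 (hαγ z hz.1).1 (hβδ z hz.2).1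
    obtain ⟨L₂, hL₂, hL₂'⟩ := hasFDerivAt_assemble (-qj) (hαγ z hz.1).2 (hβδ z hz.2).2
    simp only [pdzx, pdzy, hL₁.fderiv, hL₂.fderiv, hL₁', hL₂']
    refine ⟨?_, ?_, ?_, ?_⟩ <;> ext <;> simp <;> ring

end
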